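/- Let M be the 30×30 intersection matrix of the curves E_{ij}^β (diagonal entries −3; entry 1 between ({i,j},β) and ({s,t},γ) when {i,j} ∩ {s,t} = ∅; 0 otherwise). Remove the 5 rows and columns corresponding to the curves E₁₃^α, E₁₅^α, E₂₄^α, E₃₄^α, E₄₅^α (i.e., the indices ({1,3},1), ({1,5},1), ({2,4},1), ({3,4},1), ({4,5},1)). Then the resulting 25×25 matrix has determinant equal to 3²⁰ in absolute value. -/

import Mathlib

open Finset

/-- Index set for the 30 elliptic curves `E_{ij}^β`: a pair `i < j` in `Fin 5`
together with `β ∈ μ₃` encoded as `ZMod 3`. -/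
abbrev Idx : Type := {p : Fin 5 × Fin 5 // p.1 < p.2} × ZMod 3

/-- The 30×30 intersection matrix of the curves `E_{ij}^β`: `−3` on the diagonal,
`1` between indices with disjoint pairs `{i,j} ∩ {s,t} = ∅`, and `0` otherwise. -/
def M : Matrix Idx Idx ℚ := fun x y =>
  if x = y then -3
  else if x.1.1.1 ≠ y.1.1.1 ∧ x.1.1.1 ≠ y.1.1.2 ∧ x.1.1.2 ≠ y.1.1.1 ∧ x.1.1.2 ≠ y.1.1.2
  then 1 else 0

/-- The five removed indices: `({1,3},α), ({1,5},α), ({2,4},α), ({3,4},α), ({4,5},α)`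
(0-based pairs, with `α` corresponding to exponent `1` in `ZMod 3`). -/
def removed : Finset Idx :=
  { ⟨⟨(0, 2), by decide⟩, 1⟩, ⟨⟨(0, 4), by decide⟩, 1⟩, ⟨⟨(1, 3), by decide⟩, 1⟩,
    ⟨⟨(2, 3), by decide⟩, 1⟩, ⟨⟨(3, 4), by decide⟩, 1⟩ }

/-- The 25 remaining indices, in lexicographic order. -/
def idxFun : Fin 25 → Idx :=
  ![(⟨(0, 1), by decide⟩, 0), (⟨(0, 1), by decide⟩, 1), (⟨(0, 1), by decide⟩, 2),
    (⟨(0, 2), by decide⟩, 0), (⟨(0, 2), by decide⟩, 2), (⟨(0, 3), by decide⟩, 0),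
    (⟨(0, 3), by decide⟩, 1), (⟨(0, 3), by decide⟩, 2), (⟨(0, 4), by decide⟩, 0),
    (⟨(0, 4), by decide⟩, 2), (⟨(1, 2), by decide⟩, 0), (⟨(1, 2), by decide⟩, 1),
    (⟨(1, 2), by decide⟩, 2), (⟨(1, 3), by decide⟩, 0), (⟨(1, 3), by decide⟩, 2),
    (⟨(1, 4), by decide⟩, 0), (⟨(1, 4), by decide⟩, 1), (⟨(1, 4), by decide⟩, 2),
    (⟨(2, 3), by decide⟩, 0), (⟨(2, 3), by decide⟩, 2), (⟨(2, 4), by decide⟩, 0),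
    (⟨(2, 4), by decide⟩, 1), (⟨(2, 4), by decide⟩, 2), (⟨(3, 4), by decide⟩, 0),
    (⟨(3, 4), by decide⟩, 2)]

/-- Same, as elements of the subtype. -/
def keptFun (i : Fin 25) : {x : Idx // x ∉ removed} :=
  ⟨idxFun i, by revert i; decide +kernel⟩

theorem keptFun_bijective : Function.Bijective keptFun := by
  rw [Fintype.bijective_iff_injective_and_card]
  constructor
  · intro i j h
    have h1 : idxFun i = idxFun j := congrArg Subtype.val h
    revert i j
    have key : ∀ i j, idxFun i = idxFun j → i = j := by decide +kernel
    exact fun i j _ h => key i j h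
  · decide +kernel

/-- The integer version of the reduced intersection matrix. -/
def redMat : Matrix (Fin 25) (Fin 25) ℤ := fun i j =>
  let x := idxFun i
  let y := idxFun j
  if x = y then -3
  else if x.1.1.1 ≠ y.1.1.1 ∧ x.1.1.1 ≠ y.1.1.2 ∧ x.1.1.2 ≠ y.1.1.1 ∧ x.1.1.2 ≠ y.1.1.2
  then 1 else 0

/-- Rows of a lower triangular matrix recording Gaussian elimination. -/
def lowRows : List (List ℤ) :=
   [[1],
    [0, 1],
    [0, 0, 1],
    [0, 0, 0, 1],
    [0, 0, 0, 0, 1],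
    [0, 0, 0, 0, 0, 1],
    [0, 0, 0, 0, 0, 0, 1],
    [0, 0, 0, 0, 0, 0, 0, 1],
    [0, 0, 0, 0, 0, 0, 0, 0, 1],
    [0, 0, 0, 0, 0, 0, 0, 0, 0, 1],
    [0, 0, 0, 0, 0, 1, 1, 1, 1, 1, 3],
    [0, 0, 0, 0, 0, 3, 3, 3, 3, 3, 5, 4],
    [0, 0, 0, 0, 0, -3, -3, -3, -3, -3, -5, -5, 1],
    [0, 0, 0, 1, 1, -1, -1, -1, 0, 0, -1, -1, -1, 3],
    [0, 0, 0, 3, 3, -3, -3, -3, 0, 0, -3, -3, -3, 2, 7],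
    [0, 0, 0, 6, 6, -1, -1, -1, -15, -15, -11, -11, -11, -6, -6, 30],
    [0, 0, 0, 6, 6, -1, -1, -1, -15, -15, -11, -11, -11, -6, -6, 3, 27],
    [0, 0, 0, 6, 6, -1, -1, -1, -15, -15, -11, -11, -11, -6, -6, 3, 3, 24],
    [1, 1, 1, 0, 0, -1, -1, -1, 0, 0, -1, -1, -1, 0, 0, 0, 0, 0, 3],
    [1, 1, 1, 0, 0, -1, -1, -1, 0, 0, -1, -1, -1, 0, 0, 0, 0, 0, 1, 2],
    [7, 7, 7, -3, -3, -3, -3, -3, -3, -3, -5, -5, -5, 3, 3, -5, -5, -5, 0, 0, 21],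
    [7, 7, 7, -3, -3, -3, -3, -3, -3, -3, -5, -5, -5, 3, 3, -5, -5, -5, 0, 0, 6, 15],
    [7, 7, 7, -3, -3, -3, -3, -3, -3, -3, -5, -5, -5, 3, 3, -5, -5, -5, 0, 0, 6, 6, 9],
    [1, 1, 1, 0, 0, -1, -1, -1, 0, 0, 0, 0, 0, 0, 0, -1, -1, -1, 0, 0, 0, 0, 0, 3],
    [1, 1, 1, 0, 0, -1, -1, -1, 0, 0, 0, 0, 0, 0, 0, -1, -1, -1, 0, 0, 0, 0, 0, 1, 2]]

/-- The lower triangular elimination matrix. -/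
def lowMat : Matrix (Fin 25) (Fin 25) ℤ := fun i j =>
  (lowRows.getD i.val []).getD j.val 0

theorem lowMat_tri : ∀ j i : Fin 25, i < j → lowMat i j = 0 := by decide +kernel

theorem lowMat_diag : ∏ i, lowMat i i ≠ 0 := by decide +kernel

theorem prod_tri : ∀ i j : Fin 25, j < i → (lowMat * redMat) i j = 0 := by decide +kernel

theorem prod_diag :
    ∏ i, (lowMat * redMat) i i = (∏ i, lowMat i i) * 3 ^ 20 := by decide +kernel

theorem redMat_det : redMat.det = 3 ^ 20 := by
  have h1 : lowMat.det = ∏ i, lowMat i i :=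
    Matrix.det_of_isLowerTriangular _ (fun i j h => lowMat_tri j i h)
  have h2 : (lowMat * redMat).det = ∏ i, (lowMat * redMat) i i :=
    Matrix.det_of_isUpperTriangular (fun i j h => prod_tri i j h)
  rw [Matrix.det_mul, prod_diag, h1] at h2
  exact mul_left_cancel₀ lowMat_diag h2

/-- Removing the rows and columns of `E₁₃^α, E₁₅^α, E₂₄^α, E₃₄^α, E₄₅^α` from the
intersection matrix yields a 25×25 matrix of determinant `3²⁰` in absolute value. -/
theorem stmt_7 :
    |(M.submatrix (Subtype.val : {x : Idx // x ∉ removed} → Idx) Subtype.val).det|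
      = 3 ^ 20 := by
  have h : ((M.submatrix (Subtype.val : {x : Idx // x ∉ removed} → Idx)
      Subtype.val).submatrix (Equiv.ofBijective keptFun keptFun_bijective)
      (Equiv.ofBijective keptFun keptFun_bijective)) = (Int.castRingHom ℚ).mapMatrix redMat := by
    ext i j
    simp only [Matrix.submatrix_apply, Equiv.ofBijective_apply, RingHom.mapMatrix_apply,
      Matrix.map_apply, M, redMat, keptFun]
    split_ifs <;> simp
  rw [← Matrix.det_submatrix_equiv_self (Equiv.ofBijective keptFun keptFun_bijective), h,
    ← RingHom.map_det, redMat_det]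
  norm_num
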